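/- arXiv:2509.07779 — 3 statements merged into one kernel-verified Lean document; each statement's English description precedes it below -/
import Mathlib

section
/- Let n ≥ 1, let W be an n×n symmetric doubly stochastic real matrix with σ₂(W) < 1, let y₁, …, yₙ be points of a real inner product space, and let ȳ = (1/n)∑_{i=1}^n yᵢ be their mean. Then ∑_{i=1}^n ‖yᵢ − ȳ‖² ≤ (1/(2(1 − σ₂(W)))) · ∑_{i=1}^n ∑_{j=1}^n W i j ‖yᵢ − yⱼ‖². Equivalently, the variance (1/n)∑_i ‖yᵢ − ȳ‖² is at most (1/(2n(1 − σ₂(W)))) ∑_{i,j} W i j ‖yᵢ − yⱼ‖². -/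
open scoped BigOperators

/-- `σ₂(W)`: the operator norm of `W − (1/n)𝟙𝟙ᵀ` acting on Euclidean `n`-space. -/
noncomputable def sigma2 {n : ℕ} (W : Matrix (Fin n) (Fin n) ℝ) : ℝ :=
  ‖(Matrix.toEuclideanCLM (𝕜 := ℝ) (W - (n : ℝ)⁻¹ • Matrix.of fun _ _ => (1 : ℝ)) :
      EuclideanSpace ℝ (Fin n) →L[ℝ] EuclideanSpace ℝ (Fin n))‖

/-- A positive semidefinite real matrix has a nonnegative quadratic form on vectors of any real
inner product space. -/
theorem Matrix.PosSemidef.sum_mul_inner_nonneg {ι E : Type*} [Fintype ι]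
    [NormedAddCommGroup E] [InnerProductSpace ℝ E] {A : Matrix ι ι ℝ} (hA : A.PosSemidef)
    (z : ι → E) : 0 ≤ ∑ i, ∑ j, A i j * inner ℝ (z i) (z j) := by
  obtain ⟨m, v, rfl⟩ := Matrix.posSemidef_iff_eq_sum_vecMulVec.mp hA
  have h : ∑ i, ∑ j, (∑ k, Matrix.vecMulVec (v k) (star (v k))) i j * inner ℝ (z i) (z j) =
      ∑ k, inner ℝ (∑ i, v k i • z i) (∑ j, v k j • z j) := by
    simp only [sum_inner, inner_sum, real_inner_smul_left, real_inner_smul_right,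
      Matrix.sum_apply, Matrix.vecMulVec_apply, star_trivial, Finset.sum_mul]
    rw [Finset.sum_comm (s := (Finset.univ : Finset (Fin m)))]
    refine Finset.sum_congr rfl fun i _ => ?_
    rw [Finset.sum_comm]
    refine Finset.sum_congr rfl fun k _ => Finset.sum_congr rfl fun j _ => ?_
    rw [real_inner_comm]
    ring
  rw [h]
  exact Finset.sum_nonneg fun k _ => real_inner_self_nonneg

/-- A symmetric real matrix is dominated by its Euclidean operator norm. -/
theorem Matrix.IsSymm.posSemidef_norm_smul_one_sub {ι : Type*} [Fintype ι] [DecidableEq ι]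
    {M : Matrix ι ι ℝ} (hM : M.IsSymm) :
    (‖Matrix.toEuclideanCLM (𝕜 := ℝ) M‖ • (1 : Matrix ι ι ℝ) - M).PosSemidef := by
  refine Matrix.PosSemidef.of_dotProduct_mulVec_nonneg ?_ fun x => ?_
  · rw [Matrix.IsHermitian, Matrix.conjTranspose_eq_transpose_of_trivial]
    simp [hM.eq]
  · have h := (real_inner_le_norm (WithLp.toLp 2 x)
      (Matrix.toEuclideanCLM (𝕜 := ℝ) M (WithLp.toLp 2 x))).trans
      (mul_le_mul_of_nonneg_left ((Matrix.toEuclideanCLM (𝕜 := ℝ) M).le_opNorm _)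
        (norm_nonneg _))
    have hx : ‖WithLp.toLp 2 x‖ * ‖WithLp.toLp 2 x‖ = x ⬝ᵥ x := by
      rw [← real_inner_self_eq_norm_mul_norm, EuclideanSpace.inner_toLp_toLp, star_trivial]
    rw [mul_left_comm, hx, Matrix.toEuclideanCLM_toLp, EuclideanSpace.inner_toLp_toLp,
      star_trivial, dotProduct_comm] at h
    simpa [Matrix.sub_mulVec, Matrix.smul_mulVec, dotProduct_sub] using h

/-- The Dirichlet form of a doubly stochastic matrix, expanded around any point. -/
theorem sum_mul_norm_sub_sq_of_sum_eq_one {ι E : Type*} [Fintype ι]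
    [NormedAddCommGroup E] [InnerProductSpace ℝ E] {W : Matrix ι ι ℝ}
    (hrow : ∀ i, ∑ j, W i j = 1) (hcol : ∀ j, ∑ i, W i j = 1) (z : ι → E) :
    ∑ i, ∑ j, W i j * ‖z i - z j‖ ^ 2 =
      2 * ∑ i, ‖z i‖ ^ 2 - 2 * ∑ i, ∑ j, W i j * inner ℝ (z i) (z j) := by
  have h₁ : ∑ i, ∑ j, W i j * ‖z i‖ ^ 2 = ∑ i, ‖z i‖ ^ 2 := by
    simp [← Finset.sum_mul, hrow]
  have h₂ : ∑ i, ∑ j, W i j * ‖z j‖ ^ 2 = ∑ i, ‖z i‖ ^ 2 := by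
    rw [Finset.sum_comm]
    simp [← Finset.sum_mul, hcol]
  calc ∑ i, ∑ j, W i j * ‖z i - z j‖ ^ 2
      = ∑ i, ∑ j, (W i j * ‖z i‖ ^ 2 + W i j * ‖z j‖ ^ 2
          - 2 * (W i j * inner ℝ (z i) (z j))) := by
        refine Finset.sum_congr rfl fun i _ => Finset.sum_congr rfl fun j _ => ?_
        rw [norm_sub_sq_real]
        ring
    _ = _ := by
        simp only [Finset.sum_sub_distrib, Finset.sum_add_distrib, h₁, h₂, ← Finset.mul_sum]
        ring

/-- For centred vectors, the quadratic form of a symmetric matrix is at most `sigma2` times the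
total energy. -/
theorem sum_mul_inner_le_sigma2_mul {n : ℕ} {W : Matrix (Fin n) (Fin n) ℝ} (hW : W.IsSymm)
    {E : Type*} [NormedAddCommGroup E] [InnerProductSpace ℝ E] {z : Fin n → E}
    (hz : ∑ i, z i = 0) :
    ∑ i, ∑ j, W i j * inner ℝ (z i) (z j) ≤ sigma2 W * ∑ i, ‖z i‖ ^ 2 := by
  have hM : (W - (n : ℝ)⁻¹ • Matrix.of fun _ _ => (1 : ℝ)).IsSymm := by
    ext i j
    simp [hW.apply i j]
  have h := hM.posSemidef_norm_smul_one_sub.sum_mul_inner_nonneg z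
  have hJ : ∑ i, ∑ j, (n : ℝ)⁻¹ * inner ℝ (z i) (z j) = 0 := by
    simp [← Finset.mul_sum, ← inner_sum, hz]
  have hI : ∑ i, ∑ j, sigma2 W * (1 : Matrix (Fin n) (Fin n) ℝ) i j * inner ℝ (z i) (z j) =
      sigma2 W * ∑ i, ‖z i‖ ^ 2 := by
    simp [Matrix.one_apply, Finset.mul_sum]
  change 0 ≤ ∑ i, ∑ j, (sigma2 W * (1 : Matrix (Fin n) (Fin n) ℝ) i j -
    (W i j - (n : ℝ)⁻¹ * 1)) * inner ℝ (z i) (z j) at h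
  simp only [sub_mul, mul_one, Finset.sum_sub_distrib, hI, hJ] at h
  linarith

theorem stmt1 {n : ℕ} (hn : 1 ≤ n) (W : Matrix (Fin n) (Fin n) ℝ)
    (hsymm : W.IsSymm)
    (hnonneg : ∀ i j, 0 ≤ W i j)
    (hrow : ∀ i, ∑ j, W i j = 1)
    (hcol : ∀ j, ∑ i, W i j = 1)
    (hσ : sigma2 W < 1)
    {E : Type*} [NormedAddCommGroup E] [InnerProductSpace ℝ E]
    (y : Fin n → E) (ybar : E) (hybar : ybar = (n : ℝ)⁻¹ • ∑ i, y i) :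
    (∑ i, ‖y i - ybar‖ ^ 2 ≤
      (1 / (2 * (1 - sigma2 W))) * ∑ i, ∑ j, W i j * ‖y i - y j‖ ^ 2) ∧
    ((n : ℝ)⁻¹ * ∑ i, ‖y i - ybar‖ ^ 2 ≤
      (1 / (2 * n * (1 - sigma2 W))) * ∑ i, ∑ j, W i j * ‖y i - y j‖ ^ 2) := by
  have hn₀ : (n : ℝ) ≠ 0 := by exact_mod_cast (by lia : n ≠ 0)
  have hgap : 0 < 2 * (1 - sigma2 W) := by linarith
  have hz : ∑ i, (y i - ybar) = 0 := by
    rw [Finset.sum_sub_distrib, Finset.sum_const, Finset.card_univ, Fintype.card_fin,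
      ← Nat.cast_smul_eq_nsmul ℝ, hybar, smul_inv_smul₀ hn₀, sub_self]
  have hform := sum_mul_inner_le_sigma2_mul hsymm hz
  have hexp := sum_mul_norm_sub_sq_of_sum_eq_one hrow hcol fun i => y i - ybar
  simp only [sub_sub_sub_cancel_right] at hexp
  have hmain : ∑ i, ‖y i - ybar‖ ^ 2 ≤
      (1 / (2 * (1 - sigma2 W))) * ∑ i, ∑ j, W i j * ‖y i - y j‖ ^ 2 := by
    rw [one_div_mul_eq_div, le_div_iff₀ hgap, hexp]
    linarith
  refine ⟨hmain, ?_⟩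
  calc (n : ℝ)⁻¹ * ∑ i, ‖y i - ybar‖ ^ 2
      ≤ (n : ℝ)⁻¹ * ((1 / (2 * (1 - sigma2 W))) * ∑ i, ∑ j, W i j * ‖y i - y j‖ ^ 2) :=
        mul_le_mul_of_nonneg_left hmain (by positivity)
    _ = _ := by
        rw [← mul_assoc, mul_right_comm 2 (n : ℝ), one_div, one_div, mul_inv _ (n : ℝ),
          mul_comm (n : ℝ)⁻¹]
end

section
/- In the setting of the decentralized online projected gradient descent algorithm on a nonempty closed convex set X of diameter at most D in a real Hilbert space (n agents, symmetric doubly stochastic W with σ₂ := ‖W − (1/n)𝟙𝟙ᵀ‖ < 1, ρ := 1 − (1 − σ₂)/4, convex L-Lipschitz losses f_{i,t} with subgradients g_{i,t} of norm at most L, updates y_{i,t+1} = P_X(x_{i,t} − η g_{i,t}) and x_{i,t+1} = y_{i,t+1} + (1/2)∑_j W i j (y_{j,t+1} − y_{i,t+1}), common start x_{i,1} = x₁ ∈ X), if L > 0 and the gradient step-size is chosen as η = (D/(L√T)) · (8√n/(1 − ρ) + 1)^{−1/2}, then for every x* ∈ X the static regret satisfies (1/n)∑_{t=1}^T ∑_{i=1}^n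 f_t(x_{i,t}) − ∑_{t=1}^T f_t(x*) ≤ D L √T · √(8√n/(1 − ρ) + 1), where f_t = (1/n)∑_i f_{i,t}. -/
open scoped BigOperators RealInnerProductSpace

section Helpers

variable {H : Type*} [NormedAddCommGroup H] [InnerProductSpace ℝ H]

/-- A nearest point of a convex set is at least as close to any point of the set as the
projected point is. -/
theorem norm_nearest_sub_le {X : Set H} (hX : Convex ℝ X) {z p : H} (hp : p ∈ X)
    (hmin : ∀ w ∈ X, ‖p - z‖ ≤ ‖w - z‖) {w : H} (hw : w ∈ X) : ‖p - w‖ ≤ ‖z - w‖ := by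
  have : Nonempty X := ⟨⟨p, hp⟩⟩
  have hinf : ‖z - p‖ = ⨅ w : X, ‖z - w‖ := by
    apply le_antisymm
    · refine le_ciInf fun w => ?_
      rw [norm_sub_rev z p, norm_sub_rev z w]
      exact hmin w w.2
    · exact ciInf_le ⟨0, by rintro _ ⟨w, rfl⟩; exact norm_nonneg _⟩ (⟨p, hp⟩ : X)
  have h := (norm_eq_iInf_iff_real_inner_le_zero hX hp).1 hinf w hw
  have e : ‖z - w‖ ^ 2 = ‖z - p‖ ^ 2 - 2 * ⟪z - p, w - p⟫ + ‖w - p‖ ^ 2 := by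
    rw [← norm_sub_sq_real]; congr 2; abel
  rw [norm_sub_rev p w]
  refine le_of_sq_le_sq ?_ (norm_nonneg _)
  nlinarith [sq_nonneg ‖z - p‖]

theorem sum_smul_norm_sq {ι : Type*} [Fintype ι] (B : Matrix ι ι ℝ) (z : ι → H) :
    ∑ i, ‖∑ j, B i j • z j‖ ^ 2 = ∑ j, ∑ k, (B.transpose * B) j k * ⟪z j, z k⟫ := by
  simp_rw [← real_inner_self_eq_norm_sq, sum_inner, inner_sum, real_inner_smul_left,
    real_inner_smul_right, Matrix.mul_apply, Matrix.transpose_apply, Finset.sum_mul]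
  rw [Finset.sum_comm]
  refine Finset.sum_congr rfl fun j _ => ?_
  rw [Finset.sum_comm]
  exact Finset.sum_congr rfl fun k _ => Finset.sum_congr rfl fun i _ => by ring

open scoped MatrixOrder Matrix.Norms.L2Operator in
/-- The `ℓ²` operator norm of a real matrix also bounds its action on families of vectors of an
inner product space. -/
theorem sum_norm_sq_le_opNorm {ι : Type*} [Fintype ι] [DecidableEq ι] (B : Matrix ι ι ℝ)
    (z : ι → H) :
    ∑ i, ‖∑ j, B i j • z j‖ ^ 2 ≤
      ‖Matrix.toEuclideanCLM (𝕜 := ℝ) B‖ ^ 2 * ∑ j, ‖z j‖ ^ 2 := by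
  set s := ‖Matrix.toEuclideanCLM (𝕜 := ℝ) B‖
  have hpsd : (s ^ 2 • (1 : Matrix ι ι ℝ) - B.transpose * B).PosSemidef := by
    refine Matrix.PosSemidef.of_dotProduct_mulVec_nonneg ?_ fun v => ?_
    · simp [Matrix.IsHermitian, Matrix.conjTranspose_eq_transpose_of_trivial]
    · have h := (Matrix.toEuclideanCLM (𝕜 := ℝ) B).le_opNorm (WithLp.toLp 2 v)
      have h2 := pow_le_pow_left₀ (norm_nonneg _) h 2
      rw [mul_pow, EuclideanSpace.norm_sq_eq, EuclideanSpace.norm_sq_eq] at h2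
      have e1 : v ⬝ᵥ v = ∑ i, ‖v i‖ ^ 2 := by simp [dotProduct, sq]
      have e2 : v ⬝ᵥ ((B.transpose * B).mulVec v) = ∑ i, ‖(B.mulVec v) i‖ ^ 2 := by
        rw [← Matrix.mulVec_mulVec, Matrix.dotProduct_mulVec, Matrix.vecMul_transpose]
        simp [dotProduct, sq]
      simp only [star_trivial, Matrix.sub_mulVec, Matrix.smul_mulVec, Matrix.one_mulVec,
        dotProduct_sub, dotProduct_smul, smul_eq_mul, e1, e2]
      simpa using h2
  obtain ⟨C, hC⟩ := CStarAlgebra.nonneg_iff_eq_star_mul_self.1 hpsd.nonneg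
  rw [Matrix.star_eq_conjTranspose,
    Matrix.conjTranspose_eq_transpose_of_trivial] at hC
  have h0 : 0 ≤ ∑ i, ‖∑ j, C i j • z j‖ ^ 2 := Finset.sum_nonneg fun _ _ => sq_nonneg _
  rw [sum_smul_norm_sq, ← hC] at h0
  rw [sum_smul_norm_sq]
  have e : ∑ j, ∑ k, (s ^ 2 • (1 : Matrix ι ι ℝ) - B.transpose * B) j k * ⟪z j, z k⟫ =
      s ^ 2 * ∑ j, ‖z j‖ ^ 2 - ∑ j, ∑ k, (B.transpose * B) j k * ⟪z j, z k⟫ := by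
    simp [sub_mul, Matrix.one_apply, Finset.mul_sum]
  linarith

theorem norm_sq_convexCombination_le {ι : Type*} [Fintype ι] {w : ι → ℝ} (hw : ∀ i, 0 ≤ w i)
    (hsum : ∑ i, w i = 1) (v : ι → H) : ‖∑ i, w i • v i‖ ^ 2 ≤ ∑ i, w i * ‖v i‖ ^ 2 := by
  have hc : ConvexOn ℝ Set.univ fun v : H => ‖v‖ ^ 2 :=
    (convexOn_norm convex_univ).pow (fun _ _ => norm_nonneg _) 2
  simpa using hc.map_sum_le (t := Finset.univ) (p := v) (fun i _ => hw i) hsum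
    (fun _ _ => Set.mem_univ _)

variable {n : ℕ}

/-- The average of a finite family of vectors. -/
noncomputable def familyMean (v : Fin n → H) : H := (n : ℝ)⁻¹ • ∑ i, v i

/-- The `ℓ²` distance of a finite family of vectors to consensus. -/
noncomputable def dispersion (v : Fin n → H) : ℝ :=
  ‖(WithLp.toLp 2 fun i => v i - familyMean v : PiLp 2 fun _ : Fin n => H)‖

theorem norm_sub_familyMean_le (v : Fin n → H) (i : Fin n) :
    ‖v i - familyMean v‖ ≤ dispersion v :=
  PiLp.norm_apply_le (WithLp.toLp 2 fun i => v i - familyMean v : PiLp 2 fun _ : Fin n => H) i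

theorem norm_sub_le_two_mul_dispersion (v : Fin n → H) (i j : Fin n) :
    ‖v i - v j‖ ≤ 2 * dispersion v := by
  have h := norm_sub_le (v i - familyMean v) (v j - familyMean v)
  rw [sub_sub_sub_cancel_right] at h
  linarith [norm_sub_familyMean_le v i, norm_sub_familyMean_le v j]

theorem familyMean_const (hn : 1 ≤ n) (a : H) : familyMean (fun _ : Fin n => a) = a := by
  have : (n : ℝ) ≠ 0 := by positivity
  simp [familyMean, ← Nat.cast_smul_eq_nsmul ℝ, smul_smul, this]

theorem dispersion_const (hn : 1 ≤ n) (a : H) : dispersion (fun _ : Fin n => a) = 0 := by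
  simp only [dispersion, familyMean_const hn, sub_self]
  exact norm_zero

theorem norm_familyMean_le (hn : 1 ≤ n) {v : Fin n → H} {c : ℝ} (h : ∀ i, ‖v i‖ ≤ c) :
    ‖familyMean v‖ ≤ c := by
  have hn' : (0 : ℝ) < n := by positivity
  rw [familyMean, norm_smul, Real.norm_of_nonneg (by positivity), inv_mul_le_iff₀ hn']
  refine (norm_sum_le _ _).trans ((Finset.sum_le_sum fun i _ => h i).trans ?_)
  simp

theorem dispersion_le_add (hn : 1 ≤ n) {u v : Fin n → H} {c : ℝ} (h : ∀ i, ‖v i - u i‖ ≤ c) :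
    dispersion v ≤ dispersion u + 2 * √n * c := by
  have hm : familyMean v - familyMean u = familyMean (fun i => v i - u i) := by
    simp [familyMean, smul_sub]
  have hc : 0 ≤ c := (norm_nonneg _).trans (h ⟨0, hn⟩)
  set e : PiLp 2 fun _ : Fin n => H :=
    WithLp.toLp 2 fun i => (v i - u i) - familyMean (fun i => v i - u i) with he
  have hsplit : (WithLp.toLp 2 fun i => v i - familyMean v : PiLp 2 fun _ : Fin n => H) =
      (WithLp.toLp 2 fun i => u i - familyMean u) + e := by
    ext i
    simp only [he, PiLp.add_apply, ← hm]
    abel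
  have hbound : ‖e‖ ≤ 2 * √n * c := by
    refine le_of_sq_le_sq ?_ (by positivity)
    rw [PiLp.norm_sq_eq_of_L2]
    have h1 : ∀ i, ‖e i‖ ^ 2 ≤ (2 * c) ^ 2 := fun i => by
      refine pow_le_pow_left₀ (norm_nonneg _) ?_ 2
      have := norm_sub_le (v i - u i) (familyMean fun i => v i - u i)
      have := norm_familyMean_le hn h
      have := h i
      simp only [he]
      linarith
    refine (Finset.sum_le_sum fun i _ => h1 i).trans (le_of_eq ?_)
    rw [Finset.sum_const, Finset.card_univ, Fintype.card_fin, nsmul_eq_mul, mul_pow, mul_pow,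
      mul_pow, Real.sq_sqrt (Nat.cast_nonneg n)]
    ring
  rw [dispersion, hsplit]
  exact (norm_add_le _ _).trans (add_le_add le_rfl hbound)

theorem gossip_eq {W : Matrix (Fin n) (Fin n) ℝ} (hrow : ∀ i, ∑ j, W i j = 1) (v : Fin n → H)
    (i : Fin n) :
    v i + (2 : ℝ)⁻¹ • ∑ j, W i j • (v j - v i) =
      (2 : ℝ)⁻¹ • v i + (2 : ℝ)⁻¹ • ∑ j, W i j • v j := by
  simp only [smul_sub, Finset.sum_sub_distrib, ← Finset.sum_smul, hrow, one_smul]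
  module

theorem familyMean_gossip {W : Matrix (Fin n) (Fin n) ℝ} (hcol : ∀ j, ∑ i, W i j = 1)
    (v : Fin n → H) :
    familyMean (fun i => (2 : ℝ)⁻¹ • v i + (2 : ℝ)⁻¹ • ∑ j, W i j • v j) = familyMean v := by
  have h : ∑ i, ∑ j, W i j • v j = ∑ j, v j := by
    rw [Finset.sum_comm]
    simp [← Finset.sum_smul, hcol]
  simp only [familyMean, Finset.sum_add_distrib, ← Finset.smul_sum, h]
  module

theorem dispersion_gossip_le (hn : 1 ≤ n) {W : Matrix (Fin n) (Fin n) ℝ}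
    (hrow : ∀ i, ∑ j, W i j = 1) (hcol : ∀ j, ∑ i, W i j = 1) (v : Fin n → H) :
    dispersion (fun i => (2 : ℝ)⁻¹ • v i + (2 : ℝ)⁻¹ • ∑ j, W i j • v j) ≤
      (1 + sigma2 W) / 2 * dispersion v := by
  set m := familyMean v with hm
  set B := W - (n : ℝ)⁻¹ • Matrix.of fun _ _ => (1 : ℝ) with hB
  set a : PiLp 2 fun _ : Fin n => H := WithLp.toLp 2 fun i => v i - m with ha
  set b : PiLp 2 fun _ : Fin n => H := WithLp.toLp 2 fun i => ∑ j, B i j • (v j - m) with hb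
  have hn' : (n : ℝ) ≠ 0 := by positivity
  have hb' : ∀ i, ∑ j, B i j • (v j - m) = (∑ j, W i j • v j) - m := fun i => by
    have h1 : (n : ℝ)⁻¹ • ∑ j, v j = m := rfl
    have h2 : (n : ℝ)⁻¹ • ∑ _j : Fin n, m = m := familyMean_const hn m
    simp only [hB, Matrix.sub_apply, Matrix.smul_apply, Matrix.of_apply, smul_eq_mul, mul_one,
      sub_smul, smul_sub, Finset.sum_sub_distrib, ← Finset.sum_smul, hrow, one_smul]
    rw [← Finset.smul_sum, h1, Finset.sum_smul, ← Finset.smul_sum, h2]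
    abel
  have hsplit : (WithLp.toLp 2 fun i => ((2 : ℝ)⁻¹ • v i + (2 : ℝ)⁻¹ • ∑ j, W i j • v j) - m :
      PiLp 2 fun _ : Fin n => H) = (2 : ℝ)⁻¹ • (a + b) := by
    ext i
    simp only [ha, hb, PiLp.smul_apply, PiLp.add_apply, hb']
    module
  have hba : ‖b‖ ≤ sigma2 W * ‖a‖ := by
    refine le_of_sq_le_sq ?_ (mul_nonneg (norm_nonneg _) (norm_nonneg _))
    rw [mul_pow, PiLp.norm_sq_eq_of_L2, PiLp.norm_sq_eq_of_L2]
    exact sum_norm_sq_le_opNorm B _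
  rw [dispersion, familyMean_gossip hcol, hsplit, norm_smul]
  have : dispersion v = ‖a‖ := rfl
  rw [this, Real.norm_of_nonneg (by norm_num)]
  linarith [norm_add_le a b]

theorem sum_norm_sq_gossip_sub_le {W : Matrix (Fin n) (Fin n) ℝ} (hnonneg : ∀ i j, 0 ≤ W i j)
    (hrow : ∀ i, ∑ j, W i j = 1) (hcol : ∀ j, ∑ i, W i j = 1) (v : Fin n → H) (a : H) :
    ∑ i, ‖(2 : ℝ)⁻¹ • v i + (2 : ℝ)⁻¹ • ∑ j, W i j • v j - a‖ ^ 2 ≤ ∑ i, ‖v i - a‖ ^ 2 := by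
  have h1 : ∀ i, ‖(2 : ℝ)⁻¹ • v i + (2 : ℝ)⁻¹ • ∑ j, W i j • v j - a‖ ^ 2 ≤
      2⁻¹ * ‖v i - a‖ ^ 2 + 2⁻¹ * ∑ j, W i j * ‖v j - a‖ ^ 2 := fun i => by
    have h := norm_sq_convexCombination_le (hnonneg i) (hrow i) fun j => v j - a
    have h' := norm_sq_convexCombination_le (w := ![(2 : ℝ)⁻¹, 2⁻¹])
      (by intro i; fin_cases i <;> simp) (by norm_num [Fin.sum_univ_two])
      ![v i - a, ∑ j, W i j • (v j - a)]
    have e : ∑ j, W i j • (v j - a) = (∑ j, W i j • v j) - a := by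
      simp [smul_sub, ← Finset.sum_smul, hrow]
    simp only [Fin.sum_univ_two, Matrix.cons_val_zero, Matrix.cons_val_one] at h'
    have e2 : (2 : ℝ)⁻¹ • v i + (2 : ℝ)⁻¹ • ∑ j, W i j • v j - a =
        (2 : ℝ)⁻¹ • (v i - a) + (2 : ℝ)⁻¹ • ∑ j, W i j • (v j - a) := by
      rw [e]; module
    rw [e2]
    linarith
  refine (Finset.sum_le_sum fun i _ => h1 i).trans (le_of_eq ?_)
  have h2 : ∑ i, ∑ j, W i j * ‖v j - a‖ ^ 2 = ∑ j, ‖v j - a‖ ^ 2 := by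
    rw [Finset.sum_comm]
    simp [← Finset.sum_mul, hcol]
  rw [Finset.sum_add_distrib, ← Finset.mul_sum, ← Finset.mul_sum, h2]
  ring

end Helpers

theorem stmt6 {H : Type*} [NormedAddCommGroup H] [InnerProductSpace ℝ H] [CompleteSpace H]
    (X : Set H) (hXne : X.Nonempty) (hXcl : IsClosed X) (hXcv : Convex ℝ X)
    (D : ℝ) (hdiam : ∀ a ∈ X, ∀ b ∈ X, ‖a - b‖ ≤ D)
    {n : ℕ} (hn : 1 ≤ n) (W : Matrix (Fin n) (Fin n) ℝ)
    (hsymm : W.IsSymm)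
    (hnonneg : ∀ i j, 0 ≤ W i j)
    (hrow : ∀ i, ∑ j, W i j = 1)
    (hcol : ∀ j, ∑ i, W i j = 1)
    (hσ : sigma2 W < 1)
    (ρ : ℝ) (hρ : ρ = 1 - (1 - sigma2 W) / 4)
    (T : ℕ) (hT : 1 ≤ T) (η L : ℝ) (hL : 0 < L)
    (hη : η = D / (L * Real.sqrt T) * (Real.sqrt (8 * Real.sqrt n / (1 - ρ) + 1))⁻¹)
    (f : Fin n → ℕ → H → ℝ)
    (hconv : ∀ i, ∀ t ∈ Finset.Icc 1 T, ConvexOn ℝ X (f i t))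
    (hlip : ∀ i, ∀ t ∈ Finset.Icc 1 T, ∀ a ∈ X, ∀ b ∈ X,
      |f i t a - f i t b| ≤ L * ‖a - b‖)
    (x₁ : H) (hx₁ : x₁ ∈ X)
    (x y : Fin n → ℕ → H) (g : Fin n → ℕ → H)
    (hinit : ∀ i, x i 1 = x₁)
    -- `g i t` is a subgradient of `f i t` at `x i t` on `X`, of norm at most `L`
    (hsub : ∀ i, ∀ t ∈ Finset.Icc 1 T, ∀ w ∈ X,
      f i t w ≥ f i t (x i t) + ⟪g i t, w - x i t⟫)
    (hg : ∀ i, ∀ t ∈ Finset.Icc 1 T, ‖g i t‖ ≤ L)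
    -- `y i (t+1)` is the metric projection of `x i t - η • g i t` onto `X`
    (hproj : ∀ i, ∀ t ∈ Finset.Icc 1 T, y i (t + 1) ∈ X ∧
      ∀ w ∈ X, ‖y i (t + 1) - (x i t - η • g i t)‖ ≤ ‖w - (x i t - η • g i t)‖)
    (hcons : ∀ i, ∀ t ∈ Finset.Icc 1 T,
      x i (t + 1) = y i (t + 1) + (2 : ℝ)⁻¹ • ∑ j, W i j • (y j (t + 1) - y i (t + 1))) :
    ∀ xstar ∈ X,
      (n : ℝ)⁻¹ * ∑ t ∈ Finset.Icc 1 T, ∑ i, ((n : ℝ)⁻¹ * ∑ j, f j t (x i t)) -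
          ∑ t ∈ Finset.Icc 1 T, ((n : ℝ)⁻¹ * ∑ j, f j t xstar) ≤
        D * L * Real.sqrt T * Real.sqrt (8 * Real.sqrt n / (1 - ρ) + 1) := by
  intro xstar hxs
  obtain ⟨x₀, hx₀⟩ := hXne
  have hD : 0 ≤ D := (norm_nonneg _).trans (hdiam x₀ hx₀ x₀ hx₀)
  set σ := sigma2 W with hσdef
  have hσ0 : 0 ≤ σ := norm_nonneg _
  have hn0 : (0 : ℝ) < n := by positivity
  have hT0 : (0 : ℝ) < T := by positivity
  have hgap : 0 < 1 - σ := by linarith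
  set A := 8 * √n / (1 - ρ) + 1 with hA
  have hAeq : A = 32 * √n / (1 - σ) + 1 := by
    rw [hA, show 1 - ρ = (1 - σ) / 4 by rw [hρ]; ring, div_div_eq_mul_div]; ring
  have hApos : 0 < A := by rw [hAeq]; positivity
  have hη0 : 0 ≤ η := by rw [hη]; positivity
  have hxcons : ∀ i, ∀ t ∈ Finset.Icc 1 T,
      x i (t + 1) = (2 : ℝ)⁻¹ • y i (t + 1) + (2 : ℝ)⁻¹ • ∑ j, W i j • y j (t + 1) :=
    fun i t ht => (hcons i t ht).trans (gossip_eq hrow (fun j => y j (t + 1)) i)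
  have hmem : ∀ t, 1 ≤ t → t ≤ T → ∀ i, x i t ∈ X := by
    intro t ht
    induction t, ht using Nat.le_induction with
    | base => intro _ i; rw [hinit]; exact hx₁
    | succ t ht _ =>
      intro htT i
      have ht' : t ∈ Finset.Icc 1 T := Finset.mem_Icc.2 ⟨ht, by omega⟩
      rw [hxcons i t ht']
      exact hXcv (hproj i t ht').1
        (hXcv.sum_mem (fun j _ => hnonneg i j) (hrow i) fun j _ => (hproj j t ht').1)
        (by norm_num) (by norm_num) (by norm_num)
  have hmem' : ∀ t ∈ Finset.Icc 1 T, ∀ i, x i t ∈ X := fun t ht =>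
    hmem t (Finset.mem_Icc.1 ht).1 (Finset.mem_Icc.1 ht).2
  have hclose : ∀ i, ∀ t ∈ Finset.Icc 1 T, ∀ w ∈ X,
      ‖y i (t + 1) - w‖ ≤ ‖x i t - η • g i t - w‖ := fun i t ht w hw =>
    norm_nearest_sub_le hXcv (hproj i t ht).1 (hproj i t ht).2 hw
  have hmove : ∀ i, ∀ t ∈ Finset.Icc 1 T, ‖y i (t + 1) - x i t‖ ≤ η * L := fun i t ht => by
    refine (hclose i t ht _ (hmem' t ht i)).trans ?_
    rw [sub_sub_cancel_left, norm_neg, norm_smul, Real.norm_of_nonneg hη0]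
    exact mul_le_mul_of_nonneg_left (hg i t ht) hη0
  set K := 4 * √n * (η * L) / (1 - σ) with hK
  have hdisp : ∀ t, 1 ≤ t → t ≤ T → dispersion (fun i => x i t) ≤ K := by
    intro t ht
    induction t, ht using Nat.le_induction with
    | base =>
      intro _
      simp only [hinit, dispersion_const hn]
      positivity
    | succ t ht ih =>
      intro htT
      have ht' : t ∈ Finset.Icc 1 T := Finset.mem_Icc.2 ⟨ht, by omega⟩
      have h1 := ih (by omega)
      have h2 := dispersion_le_add hn fun i => hmove i t ht'
      have h3 := dispersion_gossip_le hn hrow hcol fun i => y i (t + 1)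
      simp only [← hxcons _ t ht', ← hσdef] at h3
      have h4 : dispersion (fun i => y i (t + 1)) ≤ K + 2 * √n * (η * L) := by linarith
      have h5 : K * (1 - σ) = 4 * √n * (η * L) := by rw [hK]; field_simp
      have h6 := mul_le_mul_of_nonneg_left h4 (show 0 ≤ (1 + σ) / 2 by positivity)
      have h7 : 0 ≤ √n * (η * L) := by positivity
      nlinarith [mul_nonneg hgap.le h7]
  -- the potential decreases up to the linearized regret
  have hdescent : ∀ t ∈ Finset.Icc 1 T,
      2 * η * ∑ i, ⟪g i t, x i t - xstar⟫ ≤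
        ∑ i, ‖x i t - xstar‖ ^ 2 - ∑ i, ‖x i (t + 1) - xstar‖ ^ 2 + n * (η * L) ^ 2 := by
    intro t ht
    have h1 := sum_norm_sq_gossip_sub_le hnonneg hrow hcol (fun i => y i (t + 1)) xstar
    simp only [← hxcons _ t ht] at h1
    have h2 : ∀ i, ‖y i (t + 1) - xstar‖ ^ 2 ≤
        ‖x i t - xstar‖ ^ 2 - 2 * η * ⟪g i t, x i t - xstar⟫ + (η * L) ^ 2 := fun i => by
      have h := pow_le_pow_left₀ (norm_nonneg _) (hclose i t ht xstar hxs) 2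
      have e : x i t - η • g i t - xstar = (x i t - xstar) - η • g i t := by abel
      rw [e, norm_sub_sq_real (x i t - xstar), real_inner_smul_right, real_inner_comm, norm_smul,
        Real.norm_of_nonneg hη0] at h
      have h' := pow_le_pow_left₀ (by positivity)
        (mul_le_mul_of_nonneg_left (hg i t ht) hη0) 2
      linarith
    have h3 := Finset.sum_le_sum fun i (_ : i ∈ Finset.univ) => h2 i
    rw [Finset.sum_add_distrib, Finset.sum_sub_distrib, ← Finset.mul_sum, Finset.sum_const,
      Finset.card_univ, Fintype.card_fin, nsmul_eq_mul] at h3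
    linarith
  have hlin : 2 * η * ∑ t ∈ Finset.Icc 1 T, ∑ i, ⟪g i t, x i t - xstar⟫ ≤
      n * D ^ 2 + T * (n * (η * L) ^ 2) := by
    rw [Finset.mul_sum]
    refine (Finset.sum_le_sum hdescent).trans ?_
    have htel : ∑ t ∈ Finset.Icc 1 T,
        (∑ i, ‖x i t - xstar‖ ^ 2 - ∑ i, ‖x i (t + 1) - xstar‖ ^ 2) =
          ∑ i, ‖x i 1 - xstar‖ ^ 2 - ∑ i, ‖x i (T + 1) - xstar‖ ^ 2 := by
      have := Finset.sum_Ico_sub (fun t => ∑ i, ‖x i t - xstar‖ ^ 2)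
        (show 1 ≤ T + 1 by omega)
      rw [← neg_inj, ← Finset.sum_neg_distrib, neg_sub, ← this]
      exact Finset.sum_congr rfl fun _ _ => neg_sub _ _
    have hfirst : ∑ i, ‖x i 1 - xstar‖ ^ 2 ≤ n * D ^ 2 := by
      simp only [hinit, Finset.sum_const, Finset.card_univ, Fintype.card_fin, nsmul_eq_mul]
      have := pow_le_pow_left₀ (norm_nonneg _) (hdiam x₁ hx₁ xstar hxs) 2
      gcongr
    have hlast : 0 ≤ ∑ i, ‖x i (T + 1) - xstar‖ ^ 2 :=
      Finset.sum_nonneg fun _ _ => sq_nonneg _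
    rw [Finset.sum_add_distrib, htel, Finset.sum_const, Nat.card_Icc, nsmul_eq_mul,
      Nat.add_sub_cancel]
    linarith
  have hround : ∀ t ∈ Finset.Icc 1 T,
      (n : ℝ)⁻¹ * ∑ i, ((n : ℝ)⁻¹ * ∑ j, f j t (x i t)) - (n : ℝ)⁻¹ * ∑ j, f j t xstar ≤
        (n : ℝ)⁻¹ * ∑ j, ⟪g j t, x j t - xstar⟫ + L * (2 * K) := by
    intro t ht
    have h1 : ∀ i j, f j t (x i t) ≤
        f j t xstar + ⟪g j t, x j t - xstar⟫ + L * (2 * K) := fun i j => by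
      have h2 := hsub j t ht xstar hxs
      rw [← neg_sub (x j t), inner_neg_right] at h2
      have h3 := (abs_le.1 (hlip j t ht _ (hmem' t ht i) _ (hmem' t ht j))).2
      have h4 := norm_sub_le_two_mul_dispersion (fun i => x i t) i j
      have h5 := hdisp t (Finset.mem_Icc.1 ht).1 (Finset.mem_Icc.1 ht).2
      have h6 : L * ‖x i t - x j t‖ ≤ L * (2 * K) :=
        mul_le_mul_of_nonneg_left (by linarith) hL.le
      linarith
    have h2 : ∀ i, (n : ℝ)⁻¹ * ∑ j, f j t (x i t) ≤
        (n : ℝ)⁻¹ * ∑ j, f j t xstar + (n : ℝ)⁻¹ * ∑ j, ⟪g j t, x j t - xstar⟫ +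
          L * (2 * K) := fun i => by
      have h := mul_le_mul_of_nonneg_left
        (Finset.sum_le_sum fun j (_ : j ∈ Finset.univ) => h1 i j) (inv_nonneg.2 hn0.le)
      rw [Finset.sum_add_distrib, Finset.sum_add_distrib, Finset.sum_const, Finset.card_univ,
        Fintype.card_fin, nsmul_eq_mul, mul_add, mul_add, inv_mul_cancel_left₀ hn0.ne'] at h
      exact h
    have h3 := mul_le_mul_of_nonneg_left
      (Finset.sum_le_sum fun i (_ : i ∈ Finset.univ) => h2 i) (inv_nonneg.2 hn0.le)
    rw [Finset.sum_const, Finset.card_univ, Fintype.card_fin, nsmul_eq_mul,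
      inv_mul_cancel_left₀ hn0.ne'] at h3
    linarith
  have hregret := Finset.sum_le_sum hround
  rw [Finset.sum_sub_distrib, ← Finset.mul_sum, Finset.sum_add_distrib, ← Finset.mul_sum,
    ← Finset.mul_sum, Finset.sum_const, Nat.card_Icc, Nat.add_sub_cancel, nsmul_eq_mul] at hregret
  refine (le_of_eq ?_).trans (hregret.trans ?_)
  · simp only [← Finset.mul_sum]
  set S := ∑ t ∈ Finset.Icc 1 T, ∑ i, ⟪g i t, x i t - xstar⟫
  rcases hD.eq_or_lt with hD0 | hDpos
  · have hη' : η = 0 := by rw [hη, ← hD0]; simp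
    have hS0 : S = 0 := Finset.sum_eq_zero fun t ht => Finset.sum_eq_zero fun i _ => by
      have := hdiam _ (hmem' t ht i) _ hxs
      rw [← hD0, norm_le_zero_iff] at this
      rw [this, inner_zero_right]
    simp [hS0, hK, hη', ← hD0]
  · have hsA : 0 < √A := Real.sqrt_pos.2 hApos
    have hsT : 0 < √(T : ℝ) := Real.sqrt_pos.2 hT0
    have hηpos : 0 < η := by rw [hη]; positivity
    have hηD : η * (L * √T * √A) = D := by rw [hη]; field_simp
    have hAsq : √A ^ 2 = A := Real.sq_sqrt hApos.le
    have hTsq : √(T : ℝ) ^ 2 = T := Real.sq_sqrt hT0.le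
    have hSn : 2 * η * ((n : ℝ)⁻¹ * S) ≤ D ^ 2 + T * (η * L) ^ 2 := by
      have := mul_le_mul_of_nonneg_left hlin (inv_nonneg.2 hn0.le)
      have e : (n : ℝ)⁻¹ * (n * D ^ 2 + T * (n * (η * L) ^ 2)) = D ^ 2 + T * (η * L) ^ 2 := by
        field_simp
      rw [e] at this
      linarith
    have hKA : 2 * K * 2 ≤ η * L * (A - 1) := by
      have h : 0 ≤ √n * (η * L) / (1 - σ) := by positivity
      have e1 : K = 4 * (√n * (η * L) / (1 - σ)) := by rw [hK]; ring
      have e2 : η * L * (A - 1) = 32 * (√n * (η * L) / (1 - σ)) := by rw [hAeq]; ring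
      linarith
    have hKA' := mul_le_mul_of_nonneg_left hKA (show 0 ≤ η * L * T by positivity)
    refine le_of_mul_le_mul_left ?_ (show 0 < 2 * η by positivity)
    have e : 2 * η * (D * L * √T * √A) = 2 * D ^ 2 := by
      rw [show 2 * η * (D * L * √T * √A) = 2 * D * (η * (L * √T * √A)) by ring, hηD]; ring
    have e' : (η * L) ^ 2 * T * A = D ^ 2 := by
      rw [← hηD, mul_pow, mul_pow, mul_pow, mul_pow, hAsq, hTsq]; ring
    rw [e]
    linarith
end

section
/- Let d ≥ 1, let f : ℝᵈ → ℝ be continuously differentiable with ‖∇f(z)‖ ≤ L for all z (so f is L-Lipschitz), let δ > 0 and x ∈ ℝᵈ. Define the smoothed function f^δ(x) := the average of f(x + δv) over v in the closed unit ball with respect to the uniform (normalized Lebesgue) probability measure. Then f^δ is differentiable at x and the two-point gradient estimator averages to its gradient: ∫_{S^{d−1}} (d/(2δ)) (f(x + δu) − f(x − δu)) u dσ(u) = ∇f^δ(x), where σ is the uniform probability measure on the unit sphere S^{d−1} ⊂ ℝᵈ and the integral is a Bochner integral of the vector-valued integrand. -/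
open MeasureTheory

/-- The uniform probability measure on the unit sphere of a finite-dimensional
real inner product space, obtained by normalizing the surface measure
`volume.toSphere`. -/
noncomputable def sphereUniform (E : Type*) [NormedAddCommGroup E] [InnerProductSpace ℝ E]
    [FiniteDimensional ℝ E] [MeasurableSpace E] [BorelSpace E] :
    Measure (Metric.sphere (0 : E) 1) :=
  ((volume : Measure E).toSphere Set.univ)⁻¹ • (volume : Measure E).toSphere


open Set Metric Filter Topology
open scoped NNReal RealInnerProductSpace

section Polar

variable {E : Type*} [NormedAddCommGroup E] [NormedSpace ℝ E] [FiniteDimensional ℝ E]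
  [MeasurableSpace E] [BorelSpace E] (μ : Measure E) [μ.IsAddHaarMeasure]

theorem continuous_integral_toSphere {h : ℝ → sphere (0 : E) 1 → ℝ}
    (hh : Continuous h.uncurry) : Continuous fun r ↦ ∫ u, h r u ∂μ.toSphere := by
  simpa using continuous_parametric_integral_of_continuous (μ := μ.toSphere) hh isCompact_univ

variable [Nontrivial E]

/-- Integration in polar coordinates. -/
theorem integral_eq_integral_Ioi_integral_toSphere {F : E → ℝ} (hF : Integrable F μ) :
    ∫ v, F v ∂μ = ∫ r in Ioi (0 : ℝ),
      r ^ (Module.finrank ℝ E - 1) * ∫ u : sphere (0 : E) 1, F (r • (u : E)) ∂μ.toSphere := by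
  set n := Module.finrank ℝ E - 1
  have hmp := μ.measurePreserving_homeomorphUnitSphereProd
  have hemb := (homeomorphUnitSphereProd E).measurableEmbedding
  have hcomp : ∀ v : ({0}ᶜ : Set E), (fun p : sphere (0 : E) 1 × Ioi (0 : ℝ) ↦
      F ((p.2 : ℝ) • (p.1 : E))) (homeomorphUnitSphereProd E v) = F v := by
    intro v
    have hv : ‖(v : E)‖ ≠ 0 := norm_ne_zero_iff.2 v.2
    simp [smul_smul, hv]
  have hint : Integrable (fun p : sphere (0 : E) 1 × Ioi (0 : ℝ) ↦ F ((p.2 : ℝ) • (p.1 : E)))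
      (μ.toSphere.prod (.volumeIoiPow n)) := by
    rw [← hmp.integrable_comp_emb hemb]
    refine Integrable.congr (f := fun v : ({0}ᶜ : Set E) ↦ F v) ?_
      (.of_forall fun v ↦ (hcomp v).symm)
    exact (integrableOn_iff_comap_subtypeVal (measurableSet_singleton _).compl).1 hF.integrableOn
  calc
    ∫ v, F v ∂μ = ∫ v : ({0}ᶜ : Set E), F v ∂(μ.comap (↑)) := by
      rw [integral_subtype_comap (measurableSet_singleton _).compl F,
        restrict_compl_singleton]
    _ = ∫ p, F ((p.2 : ℝ) • (p.1 : E)) ∂μ.toSphere.prod (.volumeIoiPow n) := by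
      rw [← hmp.integral_comp hemb]
      exact integral_congr_ae (.of_forall fun v ↦ (hcomp v).symm)
    _ = ∫ r : Ioi (0 : ℝ), (∫ u : sphere (0 : E) 1, F ((r : ℝ) • (u : E)) ∂μ.toSphere)
          ∂.volumeIoiPow n := integral_prod_symm _ hint
    _ = _ := by
      simp only [Measure.volumeIoiPow, ENNReal.ofReal]
      rw [integral_withDensity_eq_integral_smul
          (measurable_subtype_coe.pow_const _).real_toNNReal,
        integral_subtype_comap measurableSet_Ioi fun a ↦ Real.toNNReal (a ^ n) •
          ∫ u : sphere (0 : E) 1, F (a • (u : E)) ∂μ.toSphere,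
        setIntegral_congr_fun measurableSet_Ioi fun r hr ↦ ?_]
      rw [NNReal.smul_def, Real.coe_toNNReal _ (pow_nonneg hr.out.le _), smul_eq_mul]

/-- Integration over a ball in polar coordinates. -/
theorem setIntegral_ball_eq_integral_toSphere {F : E → ℝ} {R : ℝ} (hR : 0 ≤ R)
    (hF : IntegrableOn F (ball 0 R) μ) :
    ∫ v in ball 0 R, F v ∂μ = ∫ r in (0 : ℝ)..R,
      r ^ (Module.finrank ℝ E - 1) * ∫ u : sphere (0 : E) 1, F (r • (u : E)) ∂μ.toSphere := by
  rw [← integral_indicator measurableSet_ball, integral_eq_integral_Ioi_integral_toSphere μ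
    (hF.integrable_indicator measurableSet_ball), intervalIntegral.integral_of_le hR,
    integral_Ioc_eq_integral_Ioo, ← integral_indicator measurableSet_Ioi,
    ← integral_indicator measurableSet_Ioo]
  congr 1 with r
  by_cases hr : 0 < r
  · have hmem (u : sphere (0 : E) 1) : r • (u : E) ∈ ball (0 : E) R ↔ r < R := by
      simp [norm_smul, abs_of_pos hr]
    by_cases hrR : r < R <;> simp [indicator, hmem, hr, hrR, -mem_ball]
  · simp [hr]

end Polar

section Divergence

variable {E : Type*} [NormedAddCommGroup E]

theorem lipschitzWith_cone (R : ℝ) : LipschitzWith 1 fun w : E ↦ max (R - ‖w‖) 0 := by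
  refine LipschitzWith.max_const (LipschitzWith.of_dist_le_mul fun v w ↦ ?_) 0
  simpa [Real.dist_eq, dist_eq_norm, abs_sub_comm] using abs_norm_sub_norm_le v w

variable [InnerProductSpace ℝ E]

theorem lineDeriv_cone_of_norm_lt {R : ℝ} {v : E} (hv0 : v ≠ 0) (hv : ‖v‖ < R) (e : E) :
    lineDeriv ℝ (fun w : E ↦ max (R - ‖w‖) 0) v e = -(⟪v, e⟫ / ‖v‖) := by
  have hsq : HasFDerivAt (fun w : E ↦ Real.sqrt (‖w‖ ^ 2)) _ v :=
    (hasStrictFDerivAt_norm_sq v).hasFDerivAt.sqrt (by simpa using hv0)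
  have h1 := hsq.const_sub R
  have heq : (fun w : E ↦ max (R - ‖w‖) 0) =ᶠ[𝓝 v] fun w ↦ R - Real.sqrt (‖w‖ ^ 2) := by
    filter_upwards [(continuous_norm.tendsto v).eventually_lt_const hv] with w hw
    rw [Real.sqrt_sq (norm_nonneg _), max_eq_left (by linarith)]
  rw [((h1.congr_of_eventuallyEq heq).hasLineDerivAt e).lineDeriv]
  simp
  field_simp

theorem lineDeriv_cone_of_lt_norm {R : ℝ} {v : E} (hv : R < ‖v‖) (e : E) :
    lineDeriv ℝ (fun w : E ↦ max (R - ‖w‖) 0) v e = 0 := by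
  have heq : (fun w : E ↦ max (R - ‖w‖) 0) =ᶠ[𝓝 v] fun _ ↦ (0 : ℝ) := by
    filter_upwards [(continuous_norm.tendsto v).eventually_const_lt hv] with w hw
    exact max_eq_right (by linarith)
  rw [(((hasFDerivAt_const (0 : ℝ) v).congr_of_eventuallyEq heq).hasLineDerivAt e).lineDeriv]
  simp

variable [FiniteDimensional ℝ E] [MeasurableSpace E] [BorelSpace E]
  (μ : Measure E) [μ.IsAddHaarMeasure]

theorem setIntegral_ball_fderiv_mul_cone [Nontrivial E] {g : E → ℝ} (hg : ContDiff ℝ 1 g)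
    {C : ℝ≥0} (hC : LipschitzWith C g) (e : E) (R : ℝ) :
    ∫ v in ball 0 R, fderiv ℝ g v e * (R - ‖v‖) ∂μ =
      ∫ v in ball 0 R, g v * (⟪v, e⟫ / ‖v‖) ∂μ := by
  have hsupp : HasCompactSupport fun w : E ↦ max (R - ‖w‖) 0 := by
    refine HasCompactSupport.intro (isCompact_closedBall (0 : E) R) fun w hw ↦ ?_
    simp only [mem_closedBall, dist_zero_right, not_le] at hw
    exact max_eq_right (by linarith)
  have key := hC.integral_lineDeriv_mul_eq (μ := μ) (lipschitzWith_cone R) hsupp e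
  rw [← integral_indicator measurableSet_ball, ← integral_indicator measurableSet_ball]
  convert key using 1
  · congr 1 with v
    rw [(hg.differentiable one_ne_zero v).lineDeriv_eq_fderiv]
    by_cases hv : ‖v‖ < R
    · simp [indicator, hv, hv.le]
    · simp [indicator, hv, not_lt.1 hv]
  · refine integral_congr_ae ?_
    have h0 : ∀ᵐ v ∂μ, v ≠ 0 := by simp [ae_iff, measure_singleton]
    have hS : ∀ᵐ v ∂μ, ‖v‖ ≠ R := by
      have := μ.addHaar_sphere (0 : E) R
      rw [ae_iff]
      convert this using 2
      ext; simp
    filter_upwards [h0, hS] with v hv0 hvS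
    rcases lt_or_gt_of_ne hvS with hv | hv
    · rw [lineDeriv_cone_of_norm_lt hv0 hv]
      simp [indicator, hv, neg_div, mul_comm]
    · rw [lineDeriv_cone_of_lt_norm hv]
      simp [indicator, hv.le]

/-- The divergence theorem on the unit ball, for the constant direction `e`. -/
theorem setIntegral_ball_fderiv_eq_integral_toSphere [Nontrivial E] {g : E → ℝ}
    (hg : ContDiff ℝ 1 g) {C : ℝ≥0} (hC : LipschitzWith C g) (e : E) :
    ∫ v in ball 0 1, fderiv ℝ g v e ∂μ =
      ∫ u : sphere (0 : E) 1, g u * ⟪(u : E), e⟫ ∂μ.toSphere := by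
  set n := Module.finrank ℝ E - 1 with hn
  have hg' : Continuous fun v ↦ fderiv ℝ g v e :=
    (hg.continuous_fderiv one_ne_zero).clm_apply continuous_const
  have hgc := hg.continuous
  set A : ℝ → ℝ := fun r ↦ r ^ n * ∫ u : sphere (0 : E) 1, fderiv ℝ g (r • (u : E)) e ∂μ.toSphere
    with hA
  set B : ℝ → ℝ := fun r ↦ r ^ n * ∫ u : sphere (0 : E) 1,
    g (r • (u : E)) * ⟪(u : E), e⟫ ∂μ.toSphere with hB
  have hAc : Continuous A := (continuous_pow n).mul <|
    continuous_integral_toSphere μ (by simp only [Function.uncurry_def]; fun_prop)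
  have hBc : Continuous B := (continuous_pow n).mul <|
    continuous_integral_toSphere μ (by simp only [Function.uncurry_def]; fun_prop)
  have hball {F : E → ℝ} (hF : Continuous F) (R : ℝ) : IntegrableOn F (ball 0 R) μ :=
    (hF.continuousOn.integrableOn_compact (isCompact_closedBall 0 R)).mono_set
      ball_subset_closedBall
  have hid : ∀ R : ℝ, 0 < R →
      R * (∫ r in (0 : ℝ)..R, A r) - ∫ r in (0 : ℝ)..R, r * A r = ∫ r in (0 : ℝ)..R, B r := by
    intro R hR
    have h := setIntegral_ball_fderiv_mul_cone μ hg hC e R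
    rw [setIntegral_ball_eq_integral_toSphere μ hR.le (hball (by fun_prop) R),
      setIntegral_ball_eq_integral_toSphere μ hR.le ?_] at h
    · rw [← intervalIntegral.integral_const_mul, ← intervalIntegral.integral_sub
        ((by fun_prop : Continuous _).intervalIntegrable _ _)
        ((by fun_prop : Continuous _).intervalIntegrable _ _)]
      convert h using 1
      · refine intervalIntegral.integral_congr_ae (.of_forall fun r hr ↦ ?_)
        rw [uIoc_of_le hR.le] at hr
        simp only [norm_smul, norm_eq_of_mem_sphere, mul_one, Real.norm_of_nonneg hr.1.le,
          integral_mul_const, hA]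
        ring
      · refine intervalIntegral.integral_congr_ae (.of_forall fun r hr ↦ ?_)
        rw [uIoc_of_le hR.le] at hr
        simp only [norm_smul, norm_eq_of_mem_sphere, mul_one, Real.norm_of_nonneg hr.1.le, hB,
          real_inner_smul_left, mul_div_cancel_left₀ _ hr.1.ne', ← hn]
    · refine Integrable.mono' ((hball hgc.norm R).mul_const ‖e‖) ?_ (.of_forall fun v ↦ ?_)
      · exact (hgc.measurable.mul ((by fun_prop : Continuous fun v : E ↦ ⟪v, e⟫).measurable.div
          measurable_norm)).aestronglyMeasurable
      · rw [norm_mul, norm_div, norm_norm]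
        gcongr
        exact div_le_of_le_mul₀ (norm_nonneg _) (norm_nonneg _)
          ((norm_inner_le_norm v e).trans_eq (mul_comm _ _))
  have hFTC {F : ℝ → ℝ} (hF : Continuous F) :
      HasDerivAt (fun R ↦ ∫ r in (0 : ℝ)..R, F r) (F 1) 1 :=
    intervalIntegral.integral_hasDerivAt_right (hF.intervalIntegrable _ _)
      (hF.stronglyMeasurableAtFilter _ _) hF.continuousAt
  have hL := ((hasDerivAt_id (1 : ℝ)).mul (hFTC hAc)).sub
    (hFTC (F := fun r ↦ r * A r) (by fun_prop))
  have huniq := (hL.congr_of_eventuallyEq (f₁ := fun R ↦ ∫ r in (0 : ℝ)..R, B r) <| by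
    filter_upwards [lt_mem_nhds one_pos] with R hR
    simpa using (hid R hR).symm).unique (hFTC hBc)
  rw [setIntegral_ball_eq_integral_toSphere μ zero_le_one (hball hg' 1)]
  simpa [hB] using huniq

end Divergence

section Smoothing

variable {E : Type*} [NormedAddCommGroup E] [InnerProductSpace ℝ E] [FiniteDimensional ℝ E]
  [MeasurableSpace E] [BorelSpace E]

/-- Averaging a `C¹` function with bounded derivative over balls commutes with differentiation. -/
theorem hasFDerivAt_setAverage_closedBall {f : E → ℝ} (hf : ContDiff ℝ 1 f) {L : ℝ}
    (hL : ∀ z, ‖fderiv ℝ f z‖ ≤ L) (δ : ℝ) (x : E) :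
    HasFDerivAt (fun w ↦ ⨍ v in closedBall (0 : E) 1, f (w + δ • v))
      (⨍ v in closedBall (0 : E) 1, fderiv ℝ f (x + δ • v)) x := by
  simp only [setAverage_eq]
  refine HasFDerivAt.fun_const_smul (R := ℝ) ?_ _
  have hfc := hf.continuous
  have hf' := hf.continuous_fderiv one_ne_zero
  refine hasFDerivAt_integral_of_dominated_of_fderiv_le
    (F' := fun w v ↦ fderiv ℝ f (w + δ • v)) (bound := fun _ ↦ L) univ_mem
    (.of_forall fun w ↦ (by fun_prop : Continuous _).aestronglyMeasurable) ?_
    (by fun_prop : Continuous _).aestronglyMeasurable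
    (.of_forall fun v w _ ↦ hL _) ?_ (.of_forall fun v w _ ↦ ?_)
  · exact (by fun_prop : Continuous _).continuousOn.integrableOn_compact (isCompact_closedBall 0 1)
  · exact continuousOn_const.integrableOn_compact (isCompact_closedBall 0 1)
  · exact (hasFDerivAt_comp_add_right _).2 (hf.differentiable one_ne_zero _).hasFDerivAt

/-- Applying the divergence theorem to a symmetric difference of `f` about `x`. -/
theorem integral_toSphere_sub_mul_inner [Nontrivial E] {f : E → ℝ} (hf : ContDiff ℝ 1 f)
    {C : ℝ≥0} (hC : LipschitzWith C f) (δ : ℝ) (x e : E) :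
    ∫ u : sphere (0 : E) 1, (f (x + δ • (u : E)) - f (x - δ • (u : E))) * ⟪(u : E), e⟫
        ∂(volume : Measure E).toSphere =
      2 * δ * ∫ v in ball (0 : E) 1, fderiv ℝ f (x + δ • v) e := by
  have hshift (s : ℝ) : LipschitzWith ‖s‖₊ fun v : E ↦ x + s • v :=
    LipschitzWith.of_dist_le_mul fun v w ↦ by simp [dist_eq_norm, ← smul_sub, norm_smul]
  have hlip : LipschitzWith (C * ‖δ‖₊ + C * ‖-δ‖₊) fun v ↦ f (x + δ • v) - f (x + (-δ) • v) :=
    (hC.comp (hshift δ)).sub (hC.comp (hshift (-δ)))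
  have hder (s : ℝ) (v : E) : HasFDerivAt (fun v ↦ f (x + s • v))
      ((fderiv ℝ f (x + s • v)).comp (s • ContinuousLinearMap.id ℝ E)) v :=
    (hf.differentiable one_ne_zero _).hasFDerivAt.comp v
      (((hasFDerivAt_id v).const_smul s).const_add x)
  have h := setIntegral_ball_fderiv_eq_integral_toSphere volume
    (g := fun v ↦ f (x + δ • v) - f (x + (-δ) • v)) (by fun_prop) hlip e
  have hf' := hf.continuous_fderiv one_ne_zero
  have hint (s : ℝ) : IntegrableOn (fun v ↦ fderiv ℝ f (x + s • v) e) (ball (0 : E) 1) :=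
    ((by fun_prop : Continuous _).continuousOn.integrableOn_compact
      (isCompact_closedBall 0 1)).mono_set ball_subset_closedBall
  have hneg : ∫ v in ball (0 : E) 1, fderiv ℝ f (x + (-δ) • v) e =
      ∫ v in ball (0 : E) 1, fderiv ℝ f (x + δ • v) e := by
    have := (Measure.measurePreserving_neg (volume : Measure E)).setIntegral_preimage_emb
      (MeasurableEquiv.neg E).measurableEmbedding (fun v ↦ fderiv ℝ f (x + δ • v) e) (ball 0 1)
    simpa using this
  have hdiff (v : E) : fderiv ℝ (fun v ↦ f (x + δ • v) - f (x + (-δ) • v)) v e =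
      δ * (fderiv ℝ f (x + δ • v) e + fderiv ℝ f (x + (-δ) • v) e) := by
    rw [((hder δ v).fun_sub (hder (-δ) v)).fderiv]
    simp
    ring
  simp only [hdiff] at h
  rw [integral_const_mul, integral_add (hint δ) (hint (-δ)), hneg] at h
  simp only [neg_smul, ← sub_eq_add_neg] at h
  rw [← h]
  ring

end Smoothing

theorem stmt10 (d : ℕ) (hd : 1 ≤ d)
    (f : EuclideanSpace ℝ (Fin d) → ℝ) (hf : ContDiff ℝ 1 f)
    (L : ℝ) (hL : ∀ z, ‖gradient f z‖ ≤ L)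
    (δ : ℝ) (hδ : 0 < δ) (x : EuclideanSpace ℝ (Fin d)) :
    DifferentiableAt ℝ
      (fun w => ⨍ v in Metric.closedBall (0 : EuclideanSpace ℝ (Fin d)) 1, f (w + δ • v)) x ∧
    (∫ u : Metric.sphere (0 : EuclideanSpace ℝ (Fin d)) 1,
        ((d : ℝ) / (2 * δ) *
            (f (x + δ • (u : EuclideanSpace ℝ (Fin d))) -
              f (x - δ • (u : EuclideanSpace ℝ (Fin d))))) • (u : EuclideanSpace ℝ (Fin d))
        ∂(sphereUniform (EuclideanSpace ℝ (Fin d)))) =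
      gradient
        (fun w => ⨍ v in Metric.closedBall (0 : EuclideanSpace ℝ (Fin d)) 1, f (w + δ • v)) x := by
  have : NeZero d := ⟨by omega⟩
  have hfderiv (z) : ‖fderiv ℝ f z‖ ≤ L := by simpa [gradient] using hL z
  have hLip : LipschitzWith L.toNNReal f :=
    lipschitzWith_of_nnnorm_fderiv_le (hf.differentiable one_ne_zero) fun z ↦ by
      rw [← NNReal.coe_le_coe, coe_nnnorm]
      exact (hfderiv z).trans (Real.le_coe_toNNReal L)
  have hD := hasFDerivAt_setAverage_closedBall hf hfderiv δ x
  refine ⟨hD.differentiableAt, ext_inner_right ℝ fun e ↦ ?_⟩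
  have hfc := hf.continuous
  have hf' := hf.continuous_fderiv one_ne_zero
  have hint : Integrable (fun u : sphere (0 : EuclideanSpace ℝ (Fin d)) 1 ↦
      ((d : ℝ) / (2 * δ) * (f (x + δ • (u : EuclideanSpace ℝ (Fin d))) -
        f (x - δ • (u : EuclideanSpace ℝ (Fin d))))) • (u : EuclideanSpace ℝ (Fin d)))
      (volume : Measure (EuclideanSpace ℝ (Fin d))).toSphere :=
    (by fun_prop : Continuous _).integrable_of_hasCompactSupport
      (HasCompactSupport.of_compactSpace _)
  have hint' : IntegrableOn (fun v ↦ fderiv ℝ f (x + δ • v))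
      (closedBall (0 : EuclideanSpace ℝ (Fin d)) 1) :=
    (by fun_prop : Continuous _).continuousOn.integrableOn_compact (isCompact_closedBall 0 1)
  have hvol : (volume : Measure (EuclideanSpace ℝ (Fin d))).real (closedBall 0 1) =
      (volume : Measure (EuclideanSpace ℝ (Fin d))).real (ball 0 1) := by
    simp [Measure.real, Measure.addHaar_closedBall_eq_addHaar_ball]
  have hball : closedBall (0 : EuclideanSpace ℝ (Fin d)) 1 =ᵐ[volume] ball 0 1 :=
    (ae_eq_of_subset_of_measure_ge ball_subset_closedBall
      (Measure.addHaar_closedBall_eq_addHaar_ball _ _ _).le measurableSet_ball.nullMeasurableSet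
      measure_closedBall_lt_top.ne).symm
  have hd0 : (d : ℝ) ≠ 0 := Nat.cast_ne_zero.2 (NeZero.ne d)
  rw [gradient, InnerProductSpace.toDual_symm_apply, hD.fderiv, setAverage_eq, smul_apply,
    ContinuousLinearMap.integral_apply hint', setIntegral_congr_set hball, hvol, sphereUniform,
    integral_smul_measure, real_inner_smul_left, real_inner_comm, ← integral_inner hint]
  simp only [real_inner_smul_left, mul_assoc, integral_const_mul, real_inner_comm _ e]
  rw [integral_toSphere_sub_mul_inner hf hLip, ENNReal.toReal_inv, ← Measure.real,
    Measure.toSphere_real_apply_univ, finrank_euclideanSpace_fin, smul_eq_mul]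
  field_simp
end
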